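/- arXiv:1203.6869 — 3 statements merged into one kernel-verified Lean document; each statement's English description precedes it below -/
import Mathlib

section
/- The element r = P_a ⊗ J^a of iso(2,1) ⊗ iso(2,1) satisfies the classical Yang–Baxter equation [r₁₂, r₁₃] + [r₁₂, r₂₃] + [r₁₃, r₂₃] = 0 in iso(2,1) ⊗ iso(2,1) ⊗ iso(2,1). -/
noncomputable section

open scoped TensorProduct

/-- The ambient associative algebra: real 4×4 matrices.  `iso(2,1)` is realized inside it
via the standard affine embedding `x ↦ [[u, a], [0, 0]]`, and the Lie bracket is the
matrix commutator `⁅x, y⁆ = x * y - y * x`. -/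
abbrev G : Type := Matrix (Fin 4) (Fin 4) ℝ

/-- The totally antisymmetric tensor in three dimensions with `eps 0 1 2 = 1`. -/
def eps (a b c : Fin 3) : ℝ :=
  ((((b : ℕ) : ℝ) - ((a : ℕ) : ℝ)) * (((c : ℕ) : ℝ) - ((a : ℕ) : ℝ)) *
    (((c : ℕ) : ℝ) - ((b : ℕ) : ℝ))) / 2

/-- The Minkowski metric η = diag(1, −1, −1); it coincides with its inverse, so `ηf`
is used both for lower and upper indices. -/
def ηf (a b : Fin 3) : ℝ := if a = b then (if a = (0 : Fin 3) then 1 else -1) else 0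

/-- The 3×3 Lorentz generators of so(2,1): `(J3 a) b c = (J_a)^b{}_c = ε_{ac}{}^b`. -/
def J3 (a : Fin 3) : Matrix (Fin 3) (Fin 3) ℝ :=
  Matrix.of fun b c => ηf b b * eps a c b

/-- Embedding of a pair (3×3 matrix `u`, vector `x`) as the 4×4 matrix `[[u, x], [0, 0]]`. -/
def algEmb (u : Matrix (Fin 3) (Fin 3) ℝ) (x : Fin 3 → ℝ) : G :=
  Matrix.of fun i j =>
    if hi : (i : ℕ) < 3 then
      if hj : (j : ℕ) < 3 then u ⟨i, hi⟩ ⟨j, hj⟩ else x ⟨i, hi⟩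
    else 0

/-- The Lorentz generators `J_a` of iso(2,1), as 4×4 matrices. -/
def Jg (a : Fin 3) : G := algEmb (J3 a) 0

/-- The translation generators `P_a` of iso(2,1), as 4×4 matrices. -/
def Pg (a : Fin 3) : G := algEmb 0 (fun b => if b = a then 1 else 0)

/-- `iso(2,1)` = span{J₀, J₁, J₂, P₀, P₁, P₂} inside the 4×4 matrices. -/
def iso21 : Submodule ℝ G := Submodule.span ℝ (Set.range Jg ∪ Set.range Pg)

/-- Triple tensor product 𝔤 ⊗ 𝔤 ⊗ 𝔤 (associated to the left). -/
abbrev T3 : Type := TensorProduct ℝ (TensorProduct ℝ G G) G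

/-!
For commuting `x_i`, the Yang–Baxter expression of `r = ∑ x_i ⊗ y_i` collapses to
`∑ x_i ⊗ (y_i · r)`, where `y_i` acts on `r` by the adjoint action on both legs. Hence `r` solves
the equation as soon as it is invariant under the `y_i`. In iso(2,1) the translations commute, and
`P_a ⊗ J^a` is Lorentz invariant because `P_a` is a Lorentz vector and `J^a` a covector.
-/

theorem lie_sum_tmul_eq_zero_of_contragredient {R L M N ι : Type*} [CommRing R] [LieRing L]
    [LieAlgebra R L] [AddCommGroup M] [Module R M] [LieRingModule L M] [LieModule R L M]
    [AddCommGroup N] [Module R N] [LieRingModule L N] [LieModule R L N] [Fintype ι]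
    {x : L} {m : ι → M} {n : ι → N} (A : ι → ι → R) (hm : ∀ i, ⁅x, m i⁆ = ∑ j, A i j • m j)
    (hn : ∀ i, ⁅x, n i⁆ = ∑ j, -A j i • n j) :
    ⁅x, ∑ i, m i ⊗ₜ[R] n i⁆ = 0 := by
  have lie_left : ∑ i, ⁅x, m i⁆ ⊗ₜ[R] n i = ∑ i, ∑ j, A i j • m j ⊗ₜ[R] n i := by
    simp only [hm, TensorProduct.sum_tmul, TensorProduct.smul_tmul']
  have lie_right : ∑ i, m i ⊗ₜ[R] ⁅x, n i⁆ = -∑ i, ∑ j, A i j • m j ⊗ₜ[R] n i := by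
    rw [Finset.sum_comm]
    simp only [hn, TensorProduct.tmul_sum, TensorProduct.tmul_smul, neg_smul,
      TensorProduct.tmul_neg, TensorProduct.smul_tmul', Finset.sum_neg_distrib]
  simp only [lie_sum, TensorProduct.LieModule.lie_tmul_right, Finset.sum_add_distrib]
  rw [lie_left, lie_right, add_neg_cancel]

section YangBaxter

variable (R L : Type*) [CommRing R] [LieRing L] [LieAlgebra R L]

/-- The left-hand side `[r₁₂, s₁₃] + [r₁₂, s₂₃] + [r₁₃, s₂₃]` of the classical Yang–Baxter
equation, polarized to a bilinear map in `r` and `s`; the equation for `r` is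
`yangBaxter R L r r = 0`. The triple tensor product is associated to the left. -/
def yangBaxter : L ⊗[R] L →ₗ[R] L ⊗[R] L →ₗ[R] (L ⊗[R] L) ⊗[R] L :=
  let bracket : L ⊗[R] L →ₗ[R] L := LieModule.toModuleHom R L L
  let middleSwap := (TensorProduct.tensorTensorTensorComm R L L L L).toLinearMap
  let reassoc := (TensorProduct.assoc R L L L).symm.toLinearMap
  TensorProduct.curry <|
    reassoc ∘ₗ bracket.rTensor (L ⊗[R] L) ∘ₗ middleSwap
      + reassoc ∘ₗ (bracket.rTensor L ∘ₗ reassoc).lTensor L ∘ₗ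
          (TensorProduct.assoc R L L (L ⊗[R] L)).toLinearMap
      + bracket.lTensor (L ⊗[R] L) ∘ₗ middleSwap

variable {L}

theorem yangBaxter_tmul_tmul (a b c d : L) :
    yangBaxter R L (a ⊗ₜ b) (c ⊗ₜ d) =
      (⁅a, c⁆ ⊗ₜ b) ⊗ₜ d + (a ⊗ₜ ⁅b, c⁆) ⊗ₜ d + (a ⊗ₜ c) ⊗ₜ ⁅b, d⁆ := by
  simp [yangBaxter]

theorem yangBaxter_tmul_tmul_of_lie_eq_zero {a c : L} (b d : L) (h : ⁅a, c⁆ = 0) :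
    yangBaxter R L (a ⊗ₜ b) (c ⊗ₜ d) =
      (TensorProduct.assoc R L L L).symm (a ⊗ₜ ⁅b, c ⊗ₜ[R] d⁆) := by
  simp [yangBaxter_tmul_tmul, h, TensorProduct.LieModule.lie_tmul_right, TensorProduct.tmul_add]

theorem yangBaxter_self_eq_zero_of_lie_eq_zero {ι : Type*} [Fintype ι] (x y : ι → L)
    (hx : ∀ i j, ⁅x i, x j⁆ = 0) (hy : ∀ i, ⁅y i, ∑ j, x j ⊗ₜ[R] y j⁆ = 0) :
    yangBaxter R L (∑ i, x i ⊗ₜ y i) (∑ i, x i ⊗ₜ y i) = 0 := by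
  have leg (i : ι) : yangBaxter R L (x i ⊗ₜ y i) (∑ j, x j ⊗ₜ y j) = 0 :=
    calc yangBaxter R L (x i ⊗ₜ y i) (∑ j, x j ⊗ₜ y j)
      _ = (TensorProduct.assoc R L L L).symm (x i ⊗ₜ ⁅y i, ∑ j, x j ⊗ₜ[R] y j⁆) := by
        simp only [map_sum, yangBaxter_tmul_tmul_of_lie_eq_zero R _ _ (hx i _), lie_sum,
          TensorProduct.tmul_sum]
      _ = 0 := by rw [hy i, TensorProduct.tmul_zero, map_zero]
  rw [LinearMap.map_sum₂]
  exact Finset.sum_eq_zero fun i _ => leg i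

end YangBaxter

theorem eps_swap_right (a b c : Fin 3) : eps a c b = -eps a b c := by
  unfold eps
  ring

theorem sum_ηf_smul {M : Type*} [AddCommMonoid M] [Module ℝ M] (a : Fin 3) (f : Fin 3 → M) :
    ∑ b, ηf a b • f b = ηf a a • f a :=
  Finset.sum_eq_single a (fun b _ h => by simp [ηf, h.symm]) (by simp)

theorem lie_J3_J3 (a b : Fin 3) : ⁅J3 a, J3 b⁆ = ∑ c, (ηf c c * eps a b c) • J3 c := by
  -- In components this is the Jacobi identity for the structure constants `ε_{ab}^c`.
  have h₀ : ηf 0 0 = 1 := by simp [ηf]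
  have h₁ : ηf 1 1 = -1 := by simp [ηf]
  have h₂ : ηf 2 2 = -1 := by simp [ηf, Fin.ext_iff]
  ext i j
  simp only [Ring.lie_def, Matrix.sub_apply, Matrix.mul_apply, Fin.sum_univ_three,
    Matrix.add_apply, Matrix.smul_apply, smul_eq_mul, J3, Matrix.of_apply, h₀, h₁, h₂]
  fin_cases a <;> fin_cases b <;> fin_cases i <;> fin_cases j <;> norm_num [eps, h₀, h₁, h₂]

theorem lie_algEmb (u v : Matrix (Fin 3) (Fin 3) ℝ) (x y : Fin 3 → ℝ) :
    ⁅algEmb u x, algEmb v y⁆ = algEmb ⁅u, v⁆ (u.mulVec y - v.mulVec x) := by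
  ext i j
  induction i using Fin.lastCases <;> induction j using Fin.lastCases <;>
    simp [Ring.lie_def, Matrix.mul_apply, Matrix.mulVec, dotProduct,
      Fin.sum_univ_castSucc (n := 3), algEmb]

theorem algEmb_zero : algEmb 0 0 = 0 := by
  ext i j
  simp [algEmb]

theorem algEmb_sum_smul {ι : Type*} (s : Finset ι) (k : ι → ℝ)
    (u : ι → Matrix (Fin 3) (Fin 3) ℝ) (x : ι → Fin 3 → ℝ) :
    algEmb (∑ i ∈ s, k i • u i) (∑ i ∈ s, k i • x i) = ∑ i ∈ s, k i • algEmb (u i) (x i) := by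
  ext i j
  induction i using Fin.lastCases <;> induction j using Fin.lastCases <;>
    simp [Matrix.sum_apply, algEmb]

theorem lie_Pg_Pg (a b : Fin 3) : ⁅Pg a, Pg b⁆ = 0 := by
  rw [Pg, Pg, lie_algEmb]
  simp [Ring.lie_def, algEmb_zero]

theorem lie_Jg_Pg (a b : Fin 3) : ⁅Jg a, Pg b⁆ = ∑ c, (ηf c c * eps a b c) • Pg c := by
  simp only [Jg, Pg, lie_algEmb, ← algEmb_sum_smul]
  congr 1
  · simp [Ring.lie_def]
  · ext i
    simp [Matrix.mulVec, dotProduct, J3]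

theorem lie_Jg_Jg (a b : Fin 3) : ⁅Jg a, Jg b⁆ = ∑ c, (ηf c c * eps a b c) • Jg c := by
  simp [Jg, lie_algEmb, ← algEmb_sum_smul, lie_J3_J3]

/-- The Lorentz generators with raised index, `J^a = η^{ab} J_b`. -/
def Jup (a : Fin 3) : G := ∑ b, ηf a b • Jg b

theorem Jup_eq_smul (a : Fin 3) : Jup a = ηf a a • Jg a :=
  sum_ηf_smul a Jg

theorem lie_Jg_Jup (a b : Fin 3) : ⁅Jg a, Jup b⁆ = ∑ c, -(ηf b b * eps a c b) • Jup c := by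
  have lie_smul_Jg : ⁅Jg a, ηf b b • Jg b⁆ = ηf b b • ⁅Jg a, Jg b⁆ := by
    simp only [Ring.lie_def, mul_smul_comm, smul_mul_assoc, smul_sub]
  simp only [Jup_eq_smul, lie_smul_Jg, lie_Jg_Jg, Finset.smul_sum, smul_smul]
  refine Finset.sum_congr rfl fun c _ => ?_
  rw [eps_swap_right a b c]
  congr 1
  ring

/-- The classical r-matrix `r = P_a ⊗ J^a` of iso(2,1). -/
def rMatrix : G ⊗[ℝ] G := ∑ a, Pg a ⊗ₜ Jup a

theorem rMatrix_eq_sum_ηf_smul : rMatrix = ∑ a, ∑ b, ηf a b • Pg a ⊗ₜ[ℝ] Jg b := by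
  simp only [rMatrix, Jup, TensorProduct.tmul_sum, TensorProduct.tmul_smul]

section RMatrix

attribute [local instance] LieRing.ofAssociativeRing

theorem lie_Jg_rMatrix (a : Fin 3) : ⁅Jg a, rMatrix⁆ = 0 :=
  lie_sum_tmul_eq_zero_of_contragredient (fun b c => ηf c c * eps a b c) (lie_Jg_Pg a)
    (lie_Jg_Jup a)

theorem yangBaxter_rMatrix : yangBaxter ℝ G rMatrix rMatrix = 0 := by
  have lie_Jup_rMatrix (a : Fin 3) : ⁅Jup a, rMatrix⁆ = 0 := by
    rw [Jup_eq_smul, smul_lie, lie_Jg_rMatrix, smul_zero]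
  exact yangBaxter_self_eq_zero_of_lie_eq_zero ℝ Pg Jup lie_Pg_Pg lie_Jup_rMatrix

end RMatrix

/-- The classical r-matrix `r = P_a ⊗ J^a = ∑_{a,b} η^{ab} P_a ⊗ J_b`
satisfies the classical Yang–Baxter equation
`[r₁₂, r₁₃] + [r₁₂, r₂₃] + [r₁₃, r₂₃] = 0` in iso(2,1)⊗iso(2,1)⊗iso(2,1), where the
mixed brackets are written out in components:
`[r₁₂,r₁₃] = ∑ η^{ab} η^{cd} [P_a,P_c] ⊗ J_b ⊗ J_d`,
`[r₁₂,r₂₃] = ∑ η^{ab} η^{cd} P_a ⊗ [J_b,P_c] ⊗ J_d`,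
`[r₁₃,r₂₃] = ∑ η^{ab} η^{cd} P_a ⊗ P_c ⊗ [J_b,J_d]`. -/
theorem stmt1 :
    ∑ a : Fin 3, ∑ b : Fin 3, ∑ c : Fin 3, ∑ d : Fin 3,
      (ηf a b * ηf c d) •
        (((⁅Pg a, Pg c⁆ ⊗ₜ[ℝ] Jg b) ⊗ₜ[ℝ] Jg d)
          + ((Pg a ⊗ₜ[ℝ] ⁅Jg b, Pg c⁆) ⊗ₜ[ℝ] Jg d)
          + ((Pg a ⊗ₜ[ℝ] Pg c) ⊗ₜ[ℝ] ⁅Jg b, Jg d⁆)) = (0 : T3) := by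
  have cybe := yangBaxter_rMatrix
  rw [rMatrix_eq_sum_ηf_smul] at cybe
  simp only [LinearMap.map_sum₂, LinearMap.map_smul₂] at cybe
  simpa only [map_sum, map_smul, Finset.smul_sum, smul_smul, yangBaxter_tmul_tmul] using cybe
end
end

section
/- For M = (u, a) ∈ ISO(2,1) define j = −u⁻¹ a ∈ ℝ³ (so that a = −Ad(u)j). Then the two functions M ↦ tr(u) and M ↦ tr((j^a J_a) · u) (3×3 matrix traces) are invariant under conjugation: for every g ∈ ISO(2,1), they take the same values at g·M·g⁻¹ as at M. -/
noncomputable section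

/-- The Minkowski metric as a 3×3 matrix. -/
def ηm : Matrix (Fin 3) (Fin 3) ℝ := Matrix.of fun a b => ηf a b

/-- The full Lorentz group in three dimensions: {v | vᵀ η v = η}. -/
def LorentzSet : Set (Matrix (Fin 3) (Fin 3) ℝ) := {v | v.transpose * ηm * v = ηm}

theorem one_mem_LorentzSet : (1 : Matrix (Fin 3) (Fin 3) ℝ) ∈ LorentzSet := by
  simp [LorentzSet]

/-- The proper orthochronous Lorentz group SO⁺(2,1): the identity component of
the Lorentz group {v | vᵀ η v = η}. -/
def SOplus : Set (Matrix (Fin 3) (Fin 3) ℝ) :=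
  Subtype.val '' connectedComponent (⟨1, one_mem_LorentzSet⟩ : LorentzSet)

/-- The basis vector e₀ = (1, 0, 0) of ℝ³. -/
def e0v : Fin 3 → ℝ := fun i => if i = 0 then 1 else 0

/-- Elements of ISO(2,1) = SO⁺(2,1) ⋉ ℝ³ as pairs (u, a). -/
abbrev Poinc : Type := Matrix (Fin 3) (Fin 3) ℝ × (Fin 3 → ℝ)

/-- Poincaré multiplication: (u₁, a₁)·(u₂, a₂) = (u₁u₂, a₁ + u₁a₂). -/
def pmul (m₁ m₂ : Poinc) : Poinc := (m₁.1 * m₂.1, m₁.2 + m₁.1.mulVec m₂.2)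

/-- Poincaré inversion: (u, a)⁻¹ = (u⁻¹, −u⁻¹a). -/
def pinv (m : Poinc) : Poinc := (m.1⁻¹, -(m.1⁻¹.mulVec m.2))

/-- The affine action of ISO(2,1) on ℝ³: (u, a)·y = uy + a. -/
def pact (m : Poinc) (y : Fin 3 → ℝ) : Fin 3 → ℝ := m.1.mulVec y + m.2

/-- The angular-momentum vector j of M = (u, a) ∈ ISO(2,1), defined by j = −u⁻¹a
(so that a = −Ad(u)j). -/
def jvec (m : Poinc) : Fin 3 → ℝ := -(m.1⁻¹.mulVec m.2)

/-!
Write `L x = x^a J_a` and let `η` be the Minkowski metric. Then `L x` is `η` times the matrix of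
`x ⨯₃ ·`, so multiplicativity of the determinant, applied to the triple product, gives
`L (v x) = det v • v L(x) v⁻¹` for every Lorentz matrix `v`. If `det u = 1`, then taking `v = u`
shows that `x ↦ tr (L(x) u)` does not distinguish `x` from `u x`; in particular the second
invariant is `-tr (L(a) u)`. Conjugation by `(w, c)` replaces `u` by `u' = w u w⁻¹` and `a` by
`w a + (c - u' c)`: the first term contributes the old value times `det w`, and the coboundary
`c - u' c` contributes nothing.
-/

open scoped Matrix

section CrossProduct

variable {R : Type*} [CommRing R]

theorem triple_product_mulVec (v : Matrix (Fin 3) (Fin 3) R) (x y z : Fin 3 → R) :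
    (v *ᵥ x) ⬝ᵥ (v *ᵥ y) ⨯₃ (v *ᵥ z) = v.det * (x ⬝ᵥ y ⨯₃ z) := by
  have hrows : Matrix.of ![v *ᵥ x, v *ᵥ y, v *ᵥ z] = Matrix.of ![x, y, z] * vᵀ := by
    simp [Matrix.cons_mul, Matrix.vecMul_transpose]
  calc (v *ᵥ x) ⬝ᵥ (v *ᵥ y) ⨯₃ (v *ᵥ z)
      = (Matrix.of ![x, y, z] * vᵀ).det := by rw [triple_product_eq_det, ← hrows]; rfl
    _ = v.det * (x ⬝ᵥ y ⨯₃ z) := by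
        rw [Matrix.det_mul, Matrix.det_transpose, mul_comm, triple_product_eq_det]; rfl

/-- The matrix of the linear map `x ⨯₃ ·`, through which the generators of so(2,1) are compared
with the cross product. -/
def crossMatrix (x : Fin 3 → R) : Matrix (Fin 3) (Fin 3) R :=
  LinearMap.toMatrix' (crossProduct x)

theorem crossMatrix_mulVec (x y : Fin 3 → R) : crossMatrix x *ᵥ y = x ⨯₃ y :=
  LinearMap.toMatrix'_mulVec _ _

theorem transpose_mul_crossMatrix_mulVec_mul (v : Matrix (Fin 3) (Fin 3) R) (x : Fin 3 → R) :
    vᵀ * crossMatrix (v *ᵥ x) * v = v.det • crossMatrix x := by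
  refine Matrix.ext_of_mulVec_single fun i => dotProduct_eq _ _ fun y => ?_
  set e : Fin 3 → R := Pi.single i 1
  calc (vᵀ * crossMatrix (v *ᵥ x) * v) *ᵥ e ⬝ᵥ y
      = (v *ᵥ y) ⬝ᵥ (v *ᵥ x) ⨯₃ (v *ᵥ e) := by
        rw [dotProduct_comm, ← Matrix.mulVec_mulVec, ← Matrix.mulVec_mulVec, crossMatrix_mulVec,
          Matrix.dotProduct_transpose_mulVec, dotProduct_comm]
    _ = v.det * (y ⬝ᵥ x ⨯₃ e) := triple_product_mulVec v y x e
    _ = (v.det • crossMatrix x) *ᵥ e ⬝ᵥ y := by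
        rw [Matrix.smul_mulVec, crossMatrix_mulVec, smul_dotProduct, smul_eq_mul, dotProduct_comm]

theorem mul_crossMatrix_mulVec_mul {η v : Matrix (Fin 3) (Fin 3) R} (h : v * η * vᵀ = η)
    (x : Fin 3 → R) :
    η * crossMatrix (v *ᵥ x) * v = v.det • (v * (η * crossMatrix x)) :=
  calc η * crossMatrix (v *ᵥ x) * v
      = v * η * vᵀ * crossMatrix (v *ᵥ x) * v := by rw [h]
    _ = v * η * (vᵀ * crossMatrix (v *ᵥ x) * v) := by simp only [Matrix.mul_assoc]
    _ = v.det • (v * (η * crossMatrix x)) := by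
        rw [transpose_mul_crossMatrix_mulVec_mul, Matrix.mul_smul, Matrix.mul_assoc]

end CrossProduct

theorem ηm_mul_ηm : ηm * ηm = 1 := by
  ext b c
  fin_cases b <;> fin_cases c <;> simp [ηm, ηf, Matrix.mul_apply]

namespace LorentzSet

variable {v w : Matrix (Fin 3) (Fin 3) ℝ}

theorem det_sq_eq_one (hv : v ∈ LorentzSet) : v.det ^ 2 = 1 := by
  have hη : ηm.det ≠ 0 := (Matrix.isUnit_det_of_left_inverse ηm_mul_ηm).ne_zero
  have hdet : v.det * ηm.det * v.det = ηm.det := by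
    simpa only [Matrix.det_mul, Matrix.det_transpose] using congrArg Matrix.det hv
  exact mul_right_cancel₀ hη (by linear_combination hdet)

theorem isUnit (hv : v ∈ LorentzSet) : IsUnit v :=
  v.isUnit_iff_isUnit_det.mpr (IsUnit.of_pow_eq_one (det_sq_eq_one hv) two_ne_zero)

theorem mul_mem (hv : v ∈ LorentzSet) (hw : w ∈ LorentzSet) : v * w ∈ LorentzSet :=
  calc (v * w)ᵀ * ηm * (v * w) = wᵀ * (vᵀ * ηm * v) * w := by
        simp only [Matrix.transpose_mul, Matrix.mul_assoc]
    _ = ηm := by rw [hv, hw]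

theorem inv_mem (hv : v ∈ LorentzSet) : v⁻¹ ∈ LorentzSet := by
  have hinv : v * v⁻¹ = 1 := v.mul_nonsing_inv (v.isUnit_iff_isUnit_det.mp (isUnit hv))
  calc v⁻¹ᵀ * ηm * v⁻¹ = v⁻¹ᵀ * (vᵀ * ηm * v) * v⁻¹ := by rw [hv]
    _ = (v * v⁻¹)ᵀ * ηm * (v * v⁻¹) := by simp only [Matrix.transpose_mul, Matrix.mul_assoc]
    _ = ηm := by rw [hinv, Matrix.transpose_one, Matrix.one_mul, Matrix.mul_one]

theorem mul_ηm_mul_transpose (hv : v ∈ LorentzSet) : v * ηm * vᵀ = ηm := by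
  have hleft : vᵀ * ηm * (v * ηm) = 1 := by rw [← Matrix.mul_assoc, hv, ηm_mul_ηm]
  have hright : v * ηm * (vᵀ * ηm) = 1 := mul_eq_one_comm.mp hleft
  calc v * ηm * vᵀ = v * ηm * (vᵀ * ηm) * ηm := by
        simp only [Matrix.mul_assoc, ηm_mul_ηm, Matrix.mul_one]
    _ = ηm := by rw [hright, Matrix.one_mul]

end LorentzSet

namespace SOplus

variable {v : Matrix (Fin 3) (Fin 3) ℝ}

theorem mem_LorentzSet (hv : v ∈ SOplus) : v ∈ LorentzSet := by
  obtain ⟨p, -, rfl⟩ := hv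
  exact p.2

theorem det_eq_one (hv : v ∈ SOplus) : v.det = 1 := by
  obtain ⟨p, hp, rfl⟩ := hv
  have hcont : Continuous fun q : LorentzSet => q.1.det := continuous_subtype_val.matrix_det
  rcases isPreconnected_connectedComponent.eq_one_or_eq_neg_one_of_sq_eq hcont.continuousOn
    fun q _ => LorentzSet.det_sq_eq_one q.2 with hone | hneg
  · exact hone hp
  · have hdet_one := hneg (mem_connectedComponent (x := (⟨1, one_mem_LorentzSet⟩ : LorentzSet)))
    norm_num at hdet_one

end SOplus

/-- The linear map `x ↦ x^a J_a` from ℝ³ onto so(2,1). -/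
def lorentzGenerator : (Fin 3 → ℝ) →ₗ[ℝ] Matrix (Fin 3) (Fin 3) ℝ :=
  Fintype.linearCombination ℝ J3

theorem lorentzGenerator_apply (x : Fin 3 → ℝ) : lorentzGenerator x = ∑ b, x b • J3 b := rfl

theorem lorentzGenerator_eq_ηm_mul_crossMatrix (x : Fin 3 → ℝ) :
    lorentzGenerator x = ηm * crossMatrix x := by
  ext b c
  fin_cases b <;> fin_cases c <;>
    simp [lorentzGenerator_apply, crossMatrix, LinearMap.toMatrix'_apply, cross_apply, ηm, ηf, J3,
      eps, Matrix.mul_apply, Fin.sum_univ_three] <;> ring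

theorem lorentzGenerator_mulVec_mul {v : Matrix (Fin 3) (Fin 3) ℝ} (hv : v ∈ LorentzSet)
    (x : Fin 3 → ℝ) :
    lorentzGenerator (v *ᵥ x) * v = v.det • (v * lorentzGenerator x) := by
  simpa only [lorentzGenerator_eq_ηm_mul_crossMatrix] using
    mul_crossMatrix_mulVec_mul (LorentzSet.mul_ηm_mul_transpose hv) x

theorem trace_lorentzGenerator_mulVec_mul_conj {v : Matrix (Fin 3) (Fin 3) ℝ}
    (hv : v ∈ LorentzSet) (x : Fin 3 → ℝ) (X : Matrix (Fin 3) (Fin 3) ℝ) :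
    (lorentzGenerator (v *ᵥ x) * (v * X * v⁻¹)).trace
      = v.det * (lorentzGenerator x * X).trace := by
  have hconj : lorentzGenerator (v *ᵥ x) * (v * X * v⁻¹)
      = v.det • (v * (lorentzGenerator x * X) * v⁻¹) :=
    calc lorentzGenerator (v *ᵥ x) * (v * X * v⁻¹)
        = lorentzGenerator (v *ᵥ x) * v * X * v⁻¹ := by simp only [Matrix.mul_assoc]
      _ = v.det • (v * (lorentzGenerator x * X) * v⁻¹) := by
          simp only [lorentzGenerator_mulVec_mul hv, Matrix.smul_mul, Matrix.mul_assoc]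
  rw [hconj, Matrix.trace_smul, Matrix.trace_conj (LorentzSet.isUnit hv), smul_eq_mul]

theorem trace_lorentzGenerator_mulVec_mul_self {v : Matrix (Fin 3) (Fin 3) ℝ}
    (hv : v ∈ LorentzSet) (x : Fin 3 → ℝ) :
    (lorentzGenerator (v *ᵥ x) * v).trace = v.det * (lorentzGenerator x * v).trace := by
  rw [lorentzGenerator_mulVec_mul hv, Matrix.trace_smul, Matrix.trace_mul_comm, smul_eq_mul]

theorem mulVec_jvec {u : Matrix (Fin 3) (Fin 3) ℝ} (hu : IsUnit u) (a : Fin 3 → ℝ) :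
    u *ᵥ jvec (u, a) = -a := by
  rw [jvec, Matrix.mulVec_neg, Matrix.mulVec_mulVec,
    u.mul_nonsing_inv (u.isUnit_iff_isUnit_det.mp hu), Matrix.one_mulVec]

theorem trace_lorentzGenerator_jvec_mul {u : Matrix (Fin 3) (Fin 3) ℝ} (hu : u ∈ LorentzSet)
    (hdet : u.det = 1) (a : Fin 3 → ℝ) :
    (lorentzGenerator (jvec (u, a)) * u).trace = -(lorentzGenerator a * u).trace := by
  have h := trace_lorentzGenerator_mulVec_mul_self hu (jvec (u, a))
  rw [mulVec_jvec (LorentzSet.isUnit hu), hdet, one_mul] at h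
  rw [← h, map_neg, Matrix.neg_mul, Matrix.trace_neg]

theorem pmul_pmul_pinv (u w : Matrix (Fin 3) (Fin 3) ℝ) (a c : Fin 3 → ℝ) :
    pmul (pmul (w, c) (u, a)) (pinv (w, c))
      = (w * u * w⁻¹, w *ᵥ a + (c - (w * u * w⁻¹) *ᵥ c)) := by
  ext1
  · rfl
  · simp only [pmul, pinv, Matrix.mulVec_neg, Matrix.mulVec_mulVec]
    abel

theorem trace_lorentzGenerator_translation_conj_mul {u w : Matrix (Fin 3) (Fin 3) ℝ}
    (hw : w ∈ LorentzSet) (hu' : w * u * w⁻¹ ∈ LorentzSet) (hdet : (w * u * w⁻¹).det = 1)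
    (a c : Fin 3 → ℝ) :
    (lorentzGenerator (w *ᵥ a + (c - (w * u * w⁻¹) *ᵥ c)) * (w * u * w⁻¹)).trace
      = w.det * (lorentzGenerator a * u).trace := by
  rw [map_add, map_sub, Matrix.add_mul, Matrix.sub_mul, Matrix.trace_add, Matrix.trace_sub,
    trace_lorentzGenerator_mulVec_mul_conj hw, trace_lorentzGenerator_mulVec_mul_self hu', hdet,
    one_mul, sub_self, add_zero]

theorem stmt6_general (u w : Matrix (Fin 3) (Fin 3) ℝ) (hu : u ∈ LorentzSet) (hdet : u.det = 1)
    (hw : w ∈ LorentzSet) (a c : Fin 3 → ℝ) :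
    (pmul (pmul (w, c) (u, a)) (pinv (w, c))).1.trace = u.trace ∧
    ((∑ b : Fin 3, jvec (pmul (pmul (w, c) (u, a)) (pinv (w, c))) b • J3 b) *
        (pmul (pmul (w, c) (u, a)) (pinv (w, c))).1).trace
      = w.det * ((∑ b : Fin 3, jvec (u, a) b • J3 b) * u).trace := by
  have hu' : w * u * w⁻¹ ∈ LorentzSet :=
    LorentzSet.mul_mem (LorentzSet.mul_mem hw hu) (LorentzSet.inv_mem hw)
  have hdet' : (w * u * w⁻¹).det = 1 := by rw [Matrix.det_conj (LorentzSet.isUnit hw), hdet]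
  rw [pmul_pmul_pinv]
  refine ⟨Matrix.trace_conj (LorentzSet.isUnit hw) u, ?_⟩
  simp only [← lorentzGenerator_apply]
  rw [trace_lorentzGenerator_jvec_mul hu' hdet', trace_lorentzGenerator_jvec_mul hu hdet,
    trace_lorentzGenerator_translation_conj_mul hw hu' hdet', mul_neg]

/-- For M = (u, a) ∈ ISO(2,1) with j = −u⁻¹a, the functions
`M ↦ tr(u)` and `M ↦ tr((j^a J_a) · u)` are invariant under conjugation:
for every g = (w, c) ∈ ISO(2,1), they take the same values at g·M·g⁻¹ as at M. -/
theorem stmt6 (u w : Matrix (Fin 3) (Fin 3) ℝ) (hu : u ∈ SOplus) (hw : w ∈ SOplus)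
    (a c : Fin 3 → ℝ) :
    (pmul (pmul (w, c) (u, a)) (pinv (w, c))).1.trace = u.trace ∧
    ((∑ b : Fin 3, jvec (pmul (pmul (w, c) (u, a)) (pinv (w, c))) b • J3 b) *
        (pmul (pmul (w, c) (u, a)) (pinv (w, c))).1).trace
      = ((∑ b : Fin 3, jvec (u, a) b • J3 b) * u).trace := by
  simpa only [SOplus.det_eq_one hw, one_mul] using
    stmt6_general u w (SOplus.mem_LorentzSet hu) (SOplus.det_eq_one hu)
      (SOplus.mem_LorentzSet hw) a c
end
end

section
/- The two-dimensional subspaces 𝔥₁ = span{J₀, P₀} and 𝔥₂ = span{J₁, P₁} of iso(2,1) are Cartan subalgebras: each is an abelian (hence nilpotent) Lie subalgebra that is self-normalizing in iso(2,1). -/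
noncomputable section

open scoped TensorProduct

/-!
A pair `(u, p)` of vectors of Minkowski space stands for `∑ a, (u a • J_a + p a • P_a)`, and in
these coordinates the bracket is `⁅(u, p), (v, q)⁆ = (u × v, u × q + p × v)`, where `×` is the
Minkowski cross product.  It vanishes when all four vectors are multiples of a common one.
Conversely, if `(u, p)` normalizes the plane spanned by `(v, 0)` and `(0, v)`, then bracketing with
`(v, 0)` shows that `u × v` and `p × v` are multiples of `v`.  The triple product identity
`(u × v) × v = ⟨u, v⟩ v - ⟨v, v⟩ u` then forces `u` and `p` to be multiples of `v`, provided that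
`v` is not a null vector.
-/

section MinkowskiCross

open Matrix

variable {R : Type*} [CommRing R]

/-- The Minkowski inner product of signature `(1, -1, -1)`. -/
def minkowskiInner (u v : Fin 3 → R) : R := u 0 * v 0 - u 1 * v 1 - u 2 * v 2

/-- The Minkowski cross product `(u × v)^c = ε_{ab}{}^c u^a v^b`, obtained from the Euclidean one
by raising the index with the metric. -/
def minkowskiCross : (Fin 3 → R) →ₗ[R] (Fin 3 → R) →ₗ[R] (Fin 3 → R) :=
  crossProduct.compr₂ (diagonal ![1, -1, -1]).mulVecLin

theorem minkowskiCross_apply (u v : Fin 3 → R) :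
    minkowskiCross u v =
      ![u 1 * v 2 - u 2 * v 1, u 0 * v 2 - u 2 * v 0, u 1 * v 0 - u 0 * v 1] := by
  ext c
  fin_cases c <;> simp [minkowskiCross, cross_apply, mulVec_diagonal]

@[simp]
theorem minkowskiCross_self (v : Fin 3 → R) : minkowskiCross v v = 0 := by
  simp [minkowskiCross]

theorem minkowskiCross_anticomm (u v : Fin 3 → R) :
    -minkowskiCross u v = minkowskiCross v u := by
  rw [minkowskiCross, LinearMap.compr₂_apply, LinearMap.compr₂_apply, ← map_neg, cross_anticomm]

theorem minkowskiCross_jacobi (u v w : Fin 3 → R) :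
    minkowskiCross (minkowskiCross u v) w =
      minkowskiCross u (minkowskiCross v w) - minkowskiCross v (minkowskiCross u w) := by
  ext c
  fin_cases c <;> simp [minkowskiCross_apply] <;> ring

theorem minkowskiCross_minkowskiCross (u v w : Fin 3 → R) :
    minkowskiCross (minkowskiCross u v) w = minkowskiInner u w • v - minkowskiInner v w • u := by
  ext c
  fin_cases c <;> simp [minkowskiCross_apply, minkowskiInner] <;> ring

theorem minkowskiCross_eq_zero_of_mem_span_singleton {u v w : Fin 3 → R}
    (hu : u ∈ Submodule.span R {w}) (hv : v ∈ Submodule.span R {w}) :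
    minkowskiCross u v = 0 := by
  obtain ⟨s, rfl⟩ := Submodule.mem_span_singleton.1 hu
  obtain ⟨t, rfl⟩ := Submodule.mem_span_singleton.1 hv
  simp

theorem mem_span_singleton_of_minkowskiCross_mem {u v : Fin 3 → R}
    (hv : IsUnit (minkowskiInner v v)) (h : minkowskiCross u v ∈ Submodule.span R {v}) :
    u ∈ Submodule.span R {v} := by
  have parallel : minkowskiInner u v • v = minkowskiInner v v • u := by
    rw [← sub_eq_zero, ← minkowskiCross_minkowskiCross]
    exact minkowskiCross_eq_zero_of_mem_span_singleton h (Submodule.mem_span_singleton_self v)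
  rw [← Submodule.smul_mem_iff_of_isUnit _ hv, ← parallel]
  exact Submodule.smul_mem _ _ (Submodule.mem_span_singleton_self v)

/-- The matrix of `v ↦ u × v`, an element of `so(2,1)`. -/
def lorentzMatrix : (Fin 3 → R) →ₗ[R] Matrix (Fin 3) (Fin 3) R :=
  LinearMap.toMatrix'.toLinearMap ∘ₗ minkowskiCross

@[simp]
theorem lorentzMatrix_mulVec (u v : Fin 3 → R) : lorentzMatrix u *ᵥ v = minkowskiCross u v :=
  LinearMap.toMatrix'_mulVec _ _

theorem lorentzMatrix_eq (u : Fin 3 → R) :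
    lorentzMatrix u = !![0, -u 2, u 1; -u 2, 0, u 0; u 1, -u 0, 0] := by
  ext b c
  fin_cases b <;> fin_cases c <;>
    simp [lorentzMatrix, LinearMap.toMatrix'_apply, minkowskiCross_apply]

theorem lorentzMatrix_injective :
    Function.Injective (lorentzMatrix : (Fin 3 → R) → Matrix (Fin 3) (Fin 3) R) := by
  intro u v h
  simp only [lorentzMatrix_eq] at h
  ext a
  fin_cases a
  · simpa using congr_fun₂ h 1 2
  · simpa using congr_fun₂ h 0 2
  · simpa using congr_fun₂ h 0 1

theorem lie_lorentzMatrix (u v : Fin 3 → R) :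
    ⁅lorentzMatrix u, lorentzMatrix v⁆ = lorentzMatrix (minkowskiCross u v) := by
  refine ext_of_mulVec_single fun c => ?_
  simp only [Ring.lie_def, sub_mulVec, ← mulVec_mulVec, lorentzMatrix_mulVec,
    minkowskiCross_jacobi]

theorem lorentzMatrix_single (a : Fin 3) : lorentzMatrix (Pi.single a 1) = J3 a := by
  ext b c
  fin_cases a <;> fin_cases b <;> fin_cases c <;>
    simp [lorentzMatrix_eq, J3, ηf, eps] <;> norm_num

end MinkowskiCross

section AffineEmbedding

open Matrix

variable (A B : Matrix (Fin 3) (Fin 3) ℝ) (x y : Fin 3 → ℝ)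

@[simp]
theorem algEmb_castSucc_castSucc (i j : Fin 3) : algEmb A x i.castSucc j.castSucc = A i j := by
  simp [algEmb]

@[simp]
theorem algEmb_castSucc_three (i : Fin 3) : algEmb A x i.castSucc 3 = x i := by
  simp [algEmb]

@[simp]
theorem algEmb_three (j : Fin 4) : algEmb A x 3 j = 0 := by
  simp [algEmb]

theorem algEmb_injective2 : Function.Injective2 algEmb := by
  intro A B x y h
  constructor
  · ext i j
    simpa using congr_fun₂ h i.castSucc j.castSucc
  · ext i
    simpa using congr_fun₂ h i.castSucc 3

theorem algEmb_add : algEmb (A + B) (x + y) = algEmb A x + algEmb B y := by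
  ext i j
  cases i using Fin.lastCases <;> cases j using Fin.lastCases <;> simp

theorem algEmb_sub : algEmb (A - B) (x - y) = algEmb A x - algEmb B y := by
  ext i j
  cases i using Fin.lastCases <;> cases j using Fin.lastCases <;> simp

theorem algEmb_smul (r : ℝ) : algEmb (r • A) (r • x) = r • algEmb A x := by
  ext i j
  cases i using Fin.lastCases <;> cases j using Fin.lastCases <;> simp

theorem algEmb_mul : algEmb A x * algEmb B y = algEmb (A * B) (A *ᵥ y) := by
  ext i j
  cases i using Fin.lastCases <;> cases j using Fin.lastCases <;>
    simp [mul_apply, Fin.sum_univ_castSucc, mulVec, dotProduct]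

theorem lie_algEmb_s11 : ⁅algEmb A x, algEmb B y⁆ = algEmb ⁅A, B⁆ (A *ᵥ y - B *ᵥ x) := by
  rw [Ring.lie_def, algEmb_mul, algEmb_mul, ← algEmb_sub, Ring.lie_def]

end AffineEmbedding

section Poincare

/-- The element `∑ a, (u a • J_a + p a • P_a)` of `iso(2,1)` with coordinates `(u, p)`. -/
def isoMatrix : (Fin 3 → ℝ) × (Fin 3 → ℝ) →ₗ[ℝ] G where
  toFun x := algEmb (lorentzMatrix x.1) x.2
  map_add' x y := by simp only [Prod.fst_add, Prod.snd_add, map_add, algEmb_add]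
  map_smul' r x := by simp only [Prod.smul_fst, Prod.smul_snd, map_smul, algEmb_smul,
    RingHom.id_apply]

theorem isoMatrix_apply (u p : Fin 3 → ℝ) : isoMatrix (u, p) = algEmb (lorentzMatrix u) p := rfl

theorem isoMatrix_injective : Function.Injective isoMatrix := by
  rintro ⟨u, p⟩ ⟨v, q⟩ h
  obtain ⟨huv, hpq⟩ := algEmb_injective2 h
  exact Prod.ext (lorentzMatrix_injective huv) hpq

theorem lie_isoMatrix (u p v q : Fin 3 → ℝ) :
    ⁅isoMatrix (u, p), isoMatrix (v, q)⁆ =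
      isoMatrix (minkowskiCross u v, minkowskiCross u q + minkowskiCross p v) := by
  simp only [isoMatrix_apply, lie_algEmb_s11, lie_lorentzMatrix, lorentzMatrix_mulVec,
    sub_eq_add_neg, minkowskiCross_anticomm]

theorem isoMatrix_single_zero (a : Fin 3) : isoMatrix (Pi.single a 1, 0) = Jg a := by
  rw [isoMatrix_apply, lorentzMatrix_single, Jg]

theorem isoMatrix_zero_single (a : Fin 3) : isoMatrix (0, Pi.single a 1) = Pg a := by
  rw [isoMatrix_apply, map_zero, Pg]
  congr 1
  ext b
  exact Pi.single_apply a 1 b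

theorem isoMatrix_eq_coprod :
    isoMatrix = (Fintype.linearCombination ℝ Jg).coprod (Fintype.linearCombination ℝ Pg) := by
  ext1 <;> ext1 a <;> ext1
  · simp [isoMatrix_single_zero]
  · simp [isoMatrix_zero_single]

theorem range_isoMatrix : LinearMap.range isoMatrix = iso21 := by
  rw [isoMatrix_eq_coprod, LinearMap.range_coprod, Fintype.range_linearCombination,
    Fintype.range_linearCombination, ← Submodule.span_union, iso21]

/-- The plane in `iso(2,1)` spanned by the Lorentz generator `v^a J_a` and the translation
`v^a P_a`; the planes `𝔥₁` and `𝔥₂` are those of the first two basis vectors. -/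
def cartanPlane (v : Fin 3 → ℝ) : Submodule ℝ G :=
  Submodule.span ℝ {∑ a, v a • Jg a, ∑ a, v a • Pg a}

theorem cartanPlane_single (a : Fin 3) :
    cartanPlane (Pi.single a 1) = Submodule.span ℝ {Jg a, Pg a} := by
  simp [cartanPlane, Pi.single_apply]

theorem cartanPlane_eq_map (v : Fin 3 → ℝ) :
    cartanPlane v =
      ((Submodule.span ℝ {v}).prod (Submodule.span ℝ {v})).map isoMatrix := by
  rw [isoMatrix_eq_coprod, LinearMap.map_coprod_prod, Submodule.map_span, Submodule.map_span,
    Set.image_singleton, Set.image_singleton, ← Submodule.span_insert, cartanPlane,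
    Fintype.linearCombination_apply, Fintype.linearCombination_apply]

theorem isoMatrix_mem_cartanPlane {u p v : Fin 3 → ℝ} :
    isoMatrix (u, p) ∈ cartanPlane v ↔ u ∈ Submodule.span ℝ {v} ∧ p ∈ Submodule.span ℝ {v} := by
  rw [cartanPlane_eq_map, ← SetLike.mem_coe, Submodule.map_coe,
    isoMatrix_injective.mem_set_image, SetLike.mem_coe, Submodule.mem_prod]

theorem cartanPlane_le_iso21 (v : Fin 3 → ℝ) : cartanPlane v ≤ iso21 := by
  rw [cartanPlane_eq_map, ← range_isoMatrix]
  exact LinearMap.map_le_range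

theorem lie_eq_zero_of_mem_cartanPlane {v : Fin 3 → ℝ} {x y : G} (hx : x ∈ cartanPlane v)
    (hy : y ∈ cartanPlane v) : ⁅x, y⁆ = 0 := by
  rw [cartanPlane_eq_map] at hx hy
  obtain ⟨⟨u, p⟩, ⟨hu, hp⟩, rfl⟩ := hx
  obtain ⟨⟨w, q⟩, ⟨hw, hq⟩, rfl⟩ := hy
  simp only [lie_isoMatrix, minkowskiCross_eq_zero_of_mem_span_singleton hu hw,
    minkowskiCross_eq_zero_of_mem_span_singleton hu hq,
    minkowskiCross_eq_zero_of_mem_span_singleton hp hw, add_zero, Prod.mk_zero_zero, map_zero]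

theorem mem_cartanPlane_of_lie_mem {v : Fin 3 → ℝ} (hv : minkowskiInner v v ≠ 0) {x : G}
    (hx : x ∈ iso21) (h : ∀ y ∈ cartanPlane v, ⁅x, y⁆ ∈ cartanPlane v) : x ∈ cartanPlane v := by
  rw [← range_isoMatrix] at hx
  obtain ⟨⟨u, p⟩, rfl⟩ := hx
  have hv_mem : isoMatrix (v, 0) ∈ cartanPlane v :=
    isoMatrix_mem_cartanPlane.2 ⟨Submodule.mem_span_singleton_self v, Submodule.zero_mem _⟩
  have hlie := h _ hv_mem
  rw [lie_isoMatrix, isoMatrix_mem_cartanPlane, map_zero, zero_add] at hlie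
  exact isoMatrix_mem_cartanPlane.2 ⟨mem_span_singleton_of_minkowskiCross_mem hv.isUnit hlie.1,
    mem_span_singleton_of_minkowskiCross_mem hv.isUnit hlie.2⟩

end Poincare

theorem stmt11_general {v : Fin 3 → ℝ} (hv : minkowskiInner v v ≠ 0) :
    cartanPlane v ≤ iso21
      ∧ (∀ x ∈ cartanPlane v, ∀ y ∈ cartanPlane v, ⁅x, y⁆ = (0 : G))
      ∧ (∀ x ∈ iso21, (∀ y ∈ cartanPlane v, ⁅x, y⁆ ∈ cartanPlane v) → x ∈ cartanPlane v) :=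
  ⟨cartanPlane_le_iso21 v, fun _ hx _ hy => lie_eq_zero_of_mem_cartanPlane hx hy,
    fun _ hx h => mem_cartanPlane_of_lie_mem hv hx h⟩

/-- The two-dimensional subspaces 𝔥₁ = span{J₀, P₀} and
𝔥₂ = span{J₁, P₁} of iso(2,1) are Cartan subalgebras: each is an abelian (hence
nilpotent) Lie subalgebra of iso(2,1) that is self-normalizing in iso(2,1). -/
theorem stmt11 :
    (Submodule.span ℝ ({Jg 0, Pg 0} : Set G) ≤ iso21
      ∧ (∀ x ∈ Submodule.span ℝ ({Jg 0, Pg 0} : Set G),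
          ∀ y ∈ Submodule.span ℝ ({Jg 0, Pg 0} : Set G), ⁅x, y⁆ = (0 : G))
      ∧ (∀ x ∈ iso21,
          (∀ y ∈ Submodule.span ℝ ({Jg 0, Pg 0} : Set G),
            ⁅x, y⁆ ∈ Submodule.span ℝ ({Jg 0, Pg 0} : Set G)) →
          x ∈ Submodule.span ℝ ({Jg 0, Pg 0} : Set G))) ∧
    (Submodule.span ℝ ({Jg 1, Pg 1} : Set G) ≤ iso21
      ∧ (∀ x ∈ Submodule.span ℝ ({Jg 1, Pg 1} : Set G),
          ∀ y ∈ Submodule.span ℝ ({Jg 1, Pg 1} : Set G), ⁅x, y⁆ = (0 : G))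
      ∧ (∀ x ∈ iso21,
          (∀ y ∈ Submodule.span ℝ ({Jg 1, Pg 1} : Set G),
            ⁅x, y⁆ ∈ Submodule.span ℝ ({Jg 1, Pg 1} : Set G)) →
          x ∈ Submodule.span ℝ ({Jg 1, Pg 1} : Set G))) := by
  simp only [← cartanPlane_single]
  exact ⟨stmt11_general (by simp [minkowskiInner]), stmt11_general (by simp [minkowskiInner])⟩
end
end
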